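/- arXiv:1509.06224 — 2 statements merged into one kernel-verified Lean document; each statement's English description precedes it below -/
import Mathlib

section
/- Let A be an n×n real symmetric irreducible arrowhead matrix, i.e., its diagonal entries satisfy d_1 > d_2 > ⋯ > d_{n−1} (pairwise distinct) and its arrow entries satisfy ζ_j ≠ 0 for all j = 1, …, n−1. Then A has n distinct real eigenvalues λ_1 > λ_2 > ⋯ > λ_n, and they strictly interlace the diagonal entries: λ_1 > d_1 > λ_2 > d_2 > ⋯ > d_{n−1} > λ_n. -/
/-- The `(m+1) × (m+1)` symmetric arrowhead matrix `A = [[D, z], [zᵀ, α]]` with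
diagonal `d 0, …, d (m-1), α` and arrow entries `z 0, …, z (m-1)`. -/
def arrowhead {K : Type*} [CommRing K] {m : ℕ} (d z : Fin m → K) (α : K) :
    Matrix (Fin (m + 1)) (Fin (m + 1)) K :=
  Matrix.of fun j k =>
    if hj : (j : ℕ) < m then
      if hk : (k : ℕ) < m then
        if j = k then d ⟨j, hj⟩ else 0
      else z ⟨j, hj⟩
    else if hk : (k : ℕ) < m then z ⟨k, hk⟩ else α

/-!
If `A v = x v` with `v ≠ 0`, the top rows read `(x - d j) * v j = z j * t`, where `t` is the last
entry of `v`. As `A` is irreducible, this forces `t ≠ 0` and `x ≠ d j`, so `v` is determined by `x`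
up to scale. For a second eigenpair `A u = y u` with last entry `s`,
`v ⬝ᵥ u = t * s * (1 + ∑ j, z j ^ 2 / ((x - d j) * (y - d j)))`.
If no `d j` lay between `x` and `y`, every summand would be positive and `v`, `u` could not be
orthogonal. Hence consecutive members of an orthonormal eigenbasis, sorted by eigenvalue, are
separated by some `d j`; choosing one for each of the `m` gaps gives a strictly monotone self-map of
`Fin m`, which can only be the identity.
-/

open Matrix

lemma exists_antitone_eigenvalues_orthonormalBasis {𝕜 : Type*} [RCLike 𝕜] {n : ℕ}
    {A : Matrix (Fin n) (Fin n) 𝕜} (hA : A.IsHermitian) :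
    ∃ (lam : Fin n → ℝ) (b : OrthonormalBasis (Fin n) 𝕜 (EuclideanSpace 𝕜 (Fin n))),
      Antitone lam ∧ (∀ i, A *ᵥ ⇑(b i) = lam i • ⇑(b i)) ∧ spectrum ℝ A = Set.range lam := by
  let σ := Tuple.sort (OrderDual.toDual ∘ hA.eigenvalues)
  refine ⟨hA.eigenvalues ∘ σ, hA.eigenvectorBasis.reindex σ.symm,
    Tuple.monotone_sort (OrderDual.toDual ∘ hA.eigenvalues), fun i => ?_, ?_⟩
  · simpa using hA.mulVec_eigenvectorBasis (σ i)
  · rw [hA.spectrum_real_eq_range_eigenvalues, σ.surjective.range_comp]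

lemma mem_Ioo_of_forall_exists_mem_Ioo {β : Type*} [Preorder β] {m : ℕ} {d : Fin m → β}
    {lam : Fin (m + 1) → β} (hd : StrictAnti d) (hlam : Antitone lam)
    (hsep : ∀ k : Fin m, ∃ j, d j ∈ Set.Ioo (lam k.succ) (lam k.castSucc)) (k : Fin m) :
    d k ∈ Set.Ioo (lam k.succ) (lam k.castSucc) := by
  choose j hj using hsep
  have hmono : StrictMono j := fun k l hkl => hd.lt_iff_gt.1 <|
    calc d (j l) < lam l.castSucc := (hj l).2
      _ ≤ lam k.succ := hlam (Fin.succ_le_castSucc_iff.2 hkl)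
      _ < d (j k) := (hj k).1
  have hid : j k = k := le_antisymm hmono.apply_le hmono.le_apply
  simpa only [hid] using hj k

section CommRing

variable {K : Type*} [CommRing K] {m : ℕ} (d z : Fin m → K) (α : K)

lemma arrowhead_isSymm : (arrowhead d z α).IsSymm := by
  ext i j
  simp only [arrowhead, transpose_apply, of_apply]
  split_ifs <;> simp_all

lemma arrowhead_mulVec_castSucc (v : Fin (m + 1) → K) (j : Fin m) :
    (arrowhead d z α *ᵥ v) j.castSucc = d j * v j.castSucc + z j * v (Fin.last m) := by
  simp [mulVec, dotProduct, Fin.sum_univ_castSucc, arrowhead]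

lemma arrowhead_mulVec_last (v : Fin (m + 1) → K) :
    (arrowhead d z α *ᵥ v) (Fin.last m) = ∑ j, z j * v j.castSucc + α * v (Fin.last m) := by
  simp [mulVec, dotProduct, Fin.sum_univ_castSucc, arrowhead]

variable {d z α} {v : Fin (m + 1) → K} {x : K}

lemma sub_mul_eq_of_arrowhead_mulVec_eq_smul (hv : arrowhead d z α *ᵥ v = x • v) (j : Fin m) :
    (x - d j) * v j.castSucc = z j * v (Fin.last m) := by
  have hrow := congrFun hv j.castSucc
  rw [arrowhead_mulVec_castSucc, Pi.smul_apply, smul_eq_mul] at hrow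
  linear_combination -hrow

variable [NoZeroDivisors K]

lemma last_ne_zero_of_arrowhead_mulVec_eq_smul (hd : Function.Injective d) (hz : ∀ j, z j ≠ 0)
    (hv₀ : v ≠ 0) (hv : arrowhead d z α *ᵥ v = x • v) : v (Fin.last m) ≠ 0 := by
  intro hlast
  have hx {j : Fin m} (hj : v j.castSucc ≠ 0) : x = d j := by
    have hrow := sub_mul_eq_of_arrowhead_mulVec_eq_smul hv j
    rw [hlast, mul_zero] at hrow
    exact sub_eq_zero.1 ((mul_eq_zero.1 hrow).resolve_right hj)
  obtain ⟨j, hj⟩ : ∃ j : Fin m, v j.castSucc ≠ 0 := by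
    by_contra! hall
    exact hv₀ (funext (Fin.lastCases hlast hall))
  have hsupport (k : Fin m) (hkj : k ≠ j) : v k.castSucc = 0 := by
    by_contra hk
    exact hkj (hd ((hx hk).symm.trans (hx hj)))
  have hsum : ∑ k, z k * v k.castSucc = 0 := by
    simpa [arrowhead_mulVec_last, hlast] using congrFun hv (Fin.last m)
  rw [Fintype.sum_eq_single j fun k hkj => by rw [hsupport k hkj, mul_zero]] at hsum
  exact mul_ne_zero (hz j) hj hsum

lemma ne_of_arrowhead_mulVec_eq_smul (hd : Function.Injective d) (hz : ∀ j, z j ≠ 0)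
    (hv₀ : v ≠ 0) (hv : arrowhead d z α *ᵥ v = x • v) (j : Fin m) : x ≠ d j := by
  rintro rfl
  have hrow := sub_mul_eq_of_arrowhead_mulVec_eq_smul hv j
  rw [sub_self, zero_mul] at hrow
  exact mul_ne_zero (hz j) (last_ne_zero_of_arrowhead_mulVec_eq_smul hd hz hv₀ hv) hrow.symm

end CommRing

section Field

variable {K : Type*} [Field K] {m : ℕ} {d z : Fin m → K} {α x y : K} {v u : Fin (m + 1) → K}

lemma dotProduct_eq_of_arrowhead_mulVec_eq_smul (hx : ∀ j, x ≠ d j) (hy : ∀ j, y ≠ d j)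
    (hv : arrowhead d z α *ᵥ v = x • v) (hu : arrowhead d z α *ᵥ u = y • u) :
    v ⬝ᵥ u = v (Fin.last m) * u (Fin.last m) *
      (1 + ∑ j, z j ^ 2 / ((x - d j) * (y - d j))) := by
  have hterm (j : Fin m) : v j.castSucc * u j.castSucc =
      v (Fin.last m) * u (Fin.last m) * (z j ^ 2 / ((x - d j) * (y - d j))) := by
    have hvj := eq_div_of_mul_eq (sub_ne_zero.2 (hx j)) <|
      (mul_comm _ _).trans (sub_mul_eq_of_arrowhead_mulVec_eq_smul hv j)
    have huj := eq_div_of_mul_eq (sub_ne_zero.2 (hy j)) <|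
      (mul_comm _ _).trans (sub_mul_eq_of_arrowhead_mulVec_eq_smul hu j)
    rw [hvj, huj, div_mul_div_comm]
    ring
  simp only [dotProduct, Fin.sum_univ_castSucc, hterm, ← Finset.mul_sum]
  ring

lemma exists_mem_Ioo_of_dotProduct_eq_zero [LinearOrder K] [IsStrictOrderedRing K]
    (hd : Function.Injective d) (hz : ∀ j, z j ≠ 0) (hv₀ : v ≠ 0) (hu₀ : u ≠ 0)
    (hv : arrowhead d z α *ᵥ v = x • v) (hu : arrowhead d z α *ᵥ u = y • u)
    (hxy : x ≤ y) (horth : v ⬝ᵥ u = 0) : ∃ j, d j ∈ Set.Ioo x y := by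
  by_contra! hgap
  have hx := ne_of_arrowhead_mulVec_eq_smul hd hz hv₀ hv
  have hy := ne_of_arrowhead_mulVec_eq_smul hd hz hu₀ hu
  have hpos (j : Fin m) : 0 < (x - d j) * (y - d j) := by
    rcases (hx j).lt_or_gt with hlt | hgt
    · have hyj : y < d j := (not_lt.1 fun h => hgap j ⟨hlt, h⟩).lt_of_ne (hy j)
      exact mul_pos_of_neg_of_neg (sub_neg.2 hlt) (sub_neg.2 hyj)
    · exact mul_pos (sub_pos.2 hgt) (sub_pos.2 (hgt.trans_le hxy))
  have hsum : 0 ≤ ∑ j, z j ^ 2 / ((x - d j) * (y - d j)) :=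
    Finset.sum_nonneg fun j _ => div_nonneg (sq_nonneg _) (hpos j).le
  refine mul_ne_zero (mul_ne_zero ?_ ?_) (add_pos_of_pos_of_nonneg one_pos hsum).ne'
    ((dotProduct_eq_of_arrowhead_mulVec_eq_smul hx hy hv hu).symm.trans horth)
  · exact last_ne_zero_of_arrowhead_mulVec_eq_smul hd hz hv₀ hv
  · exact last_ne_zero_of_arrowhead_mulVec_eq_smul hd hz hu₀ hu

end Field

/-- Let `A` be an `n × n` real symmetric *irreducible* arrowhead matrix: its diagonal
entries satisfy `d_1 > d_2 > ⋯ > d_{n-1}` and its arrow entries satisfy `ζ_j ≠ 0`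
for all `j`.  Then `A` has `n` distinct real eigenvalues `λ_1 > λ_2 > ⋯ > λ_n`
which strictly interlace the diagonal entries:
`λ_1 > d_1 > λ_2 > d_2 > ⋯ > d_{n-1} > λ_n`. -/
theorem irreducible_arrowhead_eigenvalues_interlace (m : ℕ) (d z : Fin m → ℝ)
    (α : ℝ) (hd : StrictAnti d) (hz : ∀ j, z j ≠ 0) :
    ∃ lam : Fin (m + 1) → ℝ, StrictAnti lam ∧
      (∀ μ : ℝ, Module.End.HasEigenvalue (Matrix.toLin' (arrowhead d z α)) μ ↔
        ∃ k, μ = lam k) ∧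
      ∀ j : Fin m, lam j.castSucc > d j ∧ d j > lam j.succ := by
  obtain ⟨lam, b, hanti, heig, hspec⟩ := exists_antitone_eigenvalues_orthonormalBasis
    (isHermitian_iff_isSymm.2 (arrowhead_isSymm d z α))
  have hb₀ (i : Fin (m + 1)) : ⇑(b i) ≠ 0 := (WithLp.ofLp_eq_zero 2).ne.2 (b.orthonormal.ne_zero i)
  have hsep (k : Fin m) : ∃ j, d j ∈ Set.Ioo (lam k.succ) (lam k.castSucc) := by
    have horth : ⇑(b k.succ) ⬝ᵥ ⇑(b k.castSucc) = 0 := by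
      simpa only [EuclideanSpace.inner_eq_star_dotProduct, star_trivial] using
        b.inner_eq_zero k.castSucc_lt_succ.ne
    exact exists_mem_Ioo_of_dotProduct_eq_zero hd.injective hz (hb₀ _) (hb₀ _) (heig _) (heig _)
      (hanti k.castSucc_lt_succ.le) horth
  have hmem := mem_Ioo_of_forall_exists_mem_Ioo hd hanti hsep
  refine ⟨lam, Fin.strictAnti_iff_succ_lt.2 fun k => (hmem k).1.trans (hmem k).2, fun μ => ?_,
    fun j => (hmem j).symm⟩
  rw [Module.End.hasEigenvalue_iff_mem_spectrum, spectrum_toLin', hspec, Set.mem_range]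
  exact exists_congr fun _ => eq_comm
end

section
/- Let u be a monic real polynomial of degree n with n distinct real roots λ_1 > ⋯ > λ_n, let d_1 > ⋯ > d_{n−1} be real numbers with λ_{j+1} < d_j < λ_j for all j, let α = −p − ∑_{j=1}^{n−1} d_j where p is the coefficient of x^{n−1} in u, and let ζ_j = √(−u(d_j)/∏_{i≠j}(d_j − d_i)) (which is a positive real number). Then the real symmetric arrowhead matrix A with diagonal d_1, …, d_{n−1}, α and arrow entries ζ_1, …, ζ_{n−1} has spectrum exactly {λ_1, …, λ_n}; i.e., the eigenvalues of A are precisely the roots of u. -/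
/-!
The polynomial `u` and the product `(X - α) ∏ j, (X - d j)` are both monic of degree `m + 1`, and
`α` is chosen so that their coefficients of degree `m` agree too. Their difference has degree less
than `m`, so Lagrange interpolation at the `m` nodes `d j` writes it as
`∑ j, u(d j) / ∏_{i ≠ j} (d j - d i) * ∏_{i ≠ j} (X - d i)`.
Clearing the border column of the characteristic matrix with the adjugate of its diagonal block, the
characteristic polynomial of an arrowhead matrix is
`(X - α) ∏ j, (X - d j) - ∑ j, (z j)² ∏_{i ≠ j} (X - d i)`. So it equals `u` as soon as
`(z j)² = -u(d j) / ∏_{i ≠ j} (d j - d i)`, and interlacing makes the right-hand side nonnegative.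
-/

open Polynomial Lagrange Matrix

theorem degree_sub_lt_of_monic_of_coeff_eq {R : Type*} [Ring R] {p q : R[X]} {n : ℕ}
    (hp : p.Monic) (hq : q.Monic) (hpn : p.natDegree = n + 1) (hqn : q.natDegree = n + 1)
    (hcoeff : p.coeff n = q.coeff n) :
    (p - q).degree < n := by
  rw [degree_lt_iff_coeff_zero]
  intro k hk
  rw [coeff_sub, sub_eq_zero]
  obtain rfl | rfl | hk : k = n ∨ k = n + 1 ∨ n + 1 < k := by omega
  · exact hcoeff
  · rw [← hpn, hp.coeff_natDegree, hpn, ← hqn, hq.coeff_natDegree]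
  · rw [coeff_eq_zero_of_natDegree_lt (hpn.trans_lt hk),
      coeff_eq_zero_of_natDegree_lt (hqn.trans_lt hk)]

section CommRing

variable {R : Type*} [CommRing R]

theorem det_fromBlocks_replicateCol_replicateRow_of_isLeftRegular
    {n ι : Type*} [Fintype n] [DecidableEq n] [Fintype ι] [DecidableEq ι] [Unique ι]
    (A : Matrix n n R) (hA : IsLeftRegular A.det) (b c : n → R) (a : R) :
    (fromBlocks A (replicateCol ι b) (replicateRow ι c) (of fun _ _ => a)).det =
      a * A.det - c ⬝ᵥ A.adjugate *ᵥ b := by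
  have clear_column :
      fromBlocks A (replicateCol ι b) (replicateRow ι c) (of fun _ _ => a) *
          fromBlocks 1 (-replicateCol ι (A.adjugate *ᵥ b)) 0 (of fun _ _ => A.det) =
        fromBlocks A 0 (replicateRow ι c)
          (of fun _ _ => a * A.det - c ⬝ᵥ A.adjugate *ᵥ b) := by
    have upper : A *ᵥ A.adjugate *ᵥ b = A.det • b := by
      rw [mulVec_mulVec, mul_adjugate, smul_mulVec, one_mulVec]
    rw [fromBlocks_multiply]
    congr 1
    · simp
    · rw [Matrix.mul_neg, ← replicateCol_mulVec, upper]
      ext i j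
      simp [Matrix.mul_apply, mul_comm]
    · simp
    · ext i j
      rw [Matrix.mul_neg, Matrix.add_apply, Matrix.neg_apply, replicateRow_mul_replicateCol_apply]
      simp only [Matrix.mul_apply, of_apply, Finset.univ_unique, Finset.sum_singleton]
      ring
  apply hA
  have det_eq := congrArg det clear_column
  rw [det_mul, det_fromBlocks_zero₂₁, det_fromBlocks_zero₁₂] at det_eq
  simpa [det_unique, mul_comm] using det_eq

theorem charpoly_fromBlocks_replicateCol_replicateRow
    {n ι : Type*} [Fintype n] [DecidableEq n] [Fintype ι] [DecidableEq ι] [Unique ι]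
    (A : Matrix n n R) (b c : n → R) (a : R) :
    (fromBlocks A (replicateCol ι b) (replicateRow ι c) (of fun _ _ => a)).charpoly =
      (X - C a) * A.charpoly - (C ∘ c) ⬝ᵥ A.charmatrix.adjugate *ᵥ (C ∘ b) := by
  have hcol : -(replicateCol ι b).map C = replicateCol ι (-(C ∘ b)) := rfl
  have hrow : -(replicateRow ι c).map C = replicateRow ι (-(C ∘ c)) := rfl
  have hcorner : charmatrix (of fun _ _ : ι => a) = of fun _ _ => X - C a := by
    ext i j : 2
    rw [Subsingleton.elim j i, charmatrix_apply_eq, of_apply, of_apply]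
  rw [charpoly, charmatrix_fromBlocks, hcol, hrow, hcorner,
    det_fromBlocks_replicateCol_replicateRow_of_isLeftRegular _ A.charpoly_monic.isRegular.left,
    mulVec_neg, neg_dotProduct_neg, charpoly]

theorem arrowhead_eq_reindex_fromBlocks {m : ℕ} (d z : Fin m → R) (α : R) :
    arrowhead d z α = reindex finSumFinEquiv finSumFinEquiv
      (fromBlocks (diagonal d) (replicateCol (Fin 1) z) (replicateRow (Fin 1) z)
        (of fun _ _ => α)) := by
  rw [← Equiv.symm_apply_eq]
  ext (i | i) (j | j) <;> simp [arrowhead, diagonal_apply, Fin.ext_iff]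

theorem charpoly_arrowhead {m : ℕ} (d z : Fin m → R) (α : R) :
    (arrowhead d z α).charpoly =
      (X - C α) * nodal Finset.univ d -
        ∑ j, C (z j ^ 2) * nodal (Finset.univ.erase j) d := by
  rw [arrowhead_eq_reindex_fromBlocks, charpoly_reindex,
    charpoly_fromBlocks_replicateCol_replicateRow, charpoly_diagonal, charmatrix_diagonal,
    adjugate_diagonal]
  congr 1
  refine Finset.sum_congr rfl fun j _ => ?_
  rw [mulVec_diagonal, Function.comp_apply, nodal_eq, C_pow]
  ring

theorem degree_sub_X_sub_C_mul_nodal_lt {ι : Type*} {u : R[X]} {s : Finset ι} {v : ι → R}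
    (hu : u.Monic) (hdeg : u.natDegree = s.card + 1) {a : R}
    (ha : a = -u.coeff s.card - ∑ i ∈ s, v i) :
    (u - (X - C a) * nodal s v).degree < (s.card : WithBot ℕ) := by
  nontriviality R
  have hmonic : ((X - C a) * nodal s v).Monic := (monic_X_sub_C a).mul nodal_monic
  have hnatDegree : ((X - C a) * nodal s v).natDegree = s.card + 1 := by
    rw [(monic_X_sub_C a).natDegree_mul nodal_monic, natDegree_X_sub_C, natDegree_nodal, add_comm]
  have hnextCoeff : ((X - C a) * nodal s v).nextCoeff = u.coeff s.card := by
    rw [(monic_X_sub_C a).nextCoeff_mul nodal_monic, nextCoeff_X_sub_C, nodal_eq,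
      prod_X_sub_C_nextCoeff, ha]
    ring
  rw [nextCoeff_of_natDegree_pos (by omega), hnatDegree, Nat.add_sub_cancel] at hnextCoeff
  exact degree_sub_lt_of_monic_of_coeff_eq hu hmonic hdeg hnatDegree hnextCoeff.symm

theorem eq_nodal_of_monic_of_eval_eq_zero [IsDomain R] {ι : Type*} {u : R[X]} {s : Finset ι}
    {v : ι → R} (hu : u.Monic) (hdeg : u.natDegree = s.card) (hv : Set.InjOn v s)
    (hroots : ∀ i ∈ s, u.eval (v i) = 0) : u = nodal s v := by
  have hdegree : u.degree = s.card := by rw [degree_eq_natDegree hu.ne_zero, hdeg]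
  refine eq_of_degree_le_of_eval_index_eq s hv hdegree.le (hdegree.trans degree_nodal.symm) ?_ ?_
  · rw [hu.leadingCoeff, nodal_monic.leadingCoeff]
  · intro i hi
    rw [hroots i hi, eval_nodal_at_node hi]

end CommRing

theorem antitone_of_interlacing {β : Type*} [Preorder β] {m : ℕ} {lam : Fin (m + 1) → β}
    {d : Fin m → β} (hinter : ∀ j, d j ∈ Set.Icc (lam j.succ) (lam j.castSucc)) :
    Antitone d := by
  have hlam : Antitone lam :=
    Fin.antitone_iff_succ_le.2 fun j => (hinter j).1.trans (hinter j).2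
  intro i j hij
  obtain rfl | hlt := hij.eq_or_lt
  · exact le_rfl
  · calc d j ≤ lam j.castSucc := (hinter j).2
      _ ≤ lam i.succ := hlam (Fin.succ_le_castSucc_iff.2 hlt)
      _ ≤ d i := (hinter i).1

section Field

variable {K : Type*} [Field K]

theorem basis_eq_C_nodalWeight_mul_nodal_erase {ι : Type*} [DecidableEq ι] {s : Finset ι}
    {v : ι → K} {i : ι} (hi : i ∈ s) :
    Lagrange.basis s v i = C (nodalWeight s v i) * nodal (s.erase i) v := by
  rw [basis_eq_prod_sub_inv_mul_nodal_div hi, nodal_erase_eq_nodal_div hi]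

theorem eq_X_sub_C_mul_nodal_add_sum {ι : Type*} [DecidableEq ι] {u : K[X]} {s : Finset ι}
    {v : ι → K} (hu : u.Monic) (hdeg : u.natDegree = s.card + 1) (hv : Set.InjOn v s) :
    u = (X - C (-u.coeff s.card - ∑ i ∈ s, v i)) * nodal s v +
      ∑ i ∈ s, C (u.eval (v i) / ∏ j ∈ s.erase i, (v i - v j)) * nodal (s.erase i) v := by
  rw [← sub_eq_iff_eq_add',
    eq_interpolate hv (degree_sub_X_sub_C_mul_nodal_lt hu hdeg rfl), interpolate_apply]
  refine Finset.sum_congr rfl fun i hi => ?_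
  rw [basis_eq_C_nodalWeight_mul_nodal_erase hi, ← mul_assoc, ← C_mul, eval_sub, eval_mul,
    eval_nodal_at_node hi, mul_zero, sub_zero, nodalWeight, Finset.prod_inv_distrib,
    div_eq_mul_inv]

theorem charpoly_arrowhead_eq_of_sq_eq {m : ℕ} {u : K[X]} (hu : u.Monic)
    (hdeg : u.natDegree = m + 1) {d z : Fin m → K} (hd : Function.Injective d)
    (hz : ∀ j, z j ^ 2 = -u.eval (d j) / ∏ i ∈ Finset.univ.erase j, (d j - d i)) :
    (arrowhead d z (-u.coeff m - ∑ j, d j)).charpoly = u := by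
  have hinterp := eq_X_sub_C_mul_nodal_add_sum (s := Finset.univ) hu (by simpa using hdeg)
    hd.injOn
  rw [Finset.card_fin] at hinterp
  rw [charpoly_arrowhead]
  simp only [hz, neg_div, C_neg, neg_mul, Finset.sum_neg_distrib, sub_neg_eq_add]
  exact hinterp.symm

theorem hasEigenvalue_toLin'_iff_mem_range_of_charpoly_eq_nodal {n ι : Type*} [Fintype n]
    [DecidableEq n] [Fintype ι] {A : Matrix n n K} {v : ι → K}
    (hA : A.charpoly = nodal Finset.univ v) (μ : K) :
    Module.End.HasEigenvalue A.toLin' μ ↔ μ ∈ Set.range v := by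
  rw [Module.End.hasEigenvalue_iff_isRoot_charpoly, charpoly_toLin', hA, IsRoot, eval_nodal,
    Finset.prod_eq_zero_iff]
  simp [sub_eq_zero, eq_comm]

theorem neg_prod_sub_div_prod_sub_nonneg_of_interlacing [LinearOrder K] [IsStrictOrderedRing K]
    {m : ℕ} {lam : Fin (m + 1) → K} {d : Fin m → K}
    (hinter : ∀ j, d j ∈ Set.Icc (lam j.succ) (lam j.castSucc)) (j : Fin m) :
    0 ≤ -(∏ k, (d j - lam k)) / ∏ i ∈ Finset.univ.erase j, (d j - d i) := by
  -- Pair each `d i`, `i ≠ j`, with the adjacent `lam k` on its side away from `d j`: the two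
  -- differences have the same sign, and only the neighbours of `d j` are left over.
  have hd := antitone_of_interlacing hinter
  have neighbours : 0 ≤ (lam j.castSucc - d j) * (d j - lam j.succ) :=
    mul_nonneg (sub_nonneg.2 (hinter j).2) (sub_nonneg.2 (hinter j).1)
  have others : 0 ≤ ∏ i ∈ Finset.univ.erase j,
      (d j - lam (j.castSucc.succAbove i)) / (d j - d i) := by
    refine Finset.prod_nonneg fun i hi => ?_
    rcases lt_or_gt_of_ne (Finset.ne_of_mem_erase hi) with hij | hji
    · rw [Fin.succAbove_of_castSucc_lt _ _ (Fin.castSucc_lt_castSucc_iff.2 hij)]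
      have hdji := hd hij.le
      exact div_nonneg_of_nonpos (sub_nonpos.2 (hdji.trans (hinter i).2)) (sub_nonpos.2 hdji)
    · rw [Fin.succAbove_of_le_castSucc _ _ (Fin.castSucc_le_castSucc_iff.2 hji.le)]
      have hdij := hd hji.le
      exact div_nonneg (sub_nonneg.2 ((hinter i).1.trans hdij)) (sub_nonneg.2 hdij)
  calc 0 ≤ _ := mul_nonneg neighbours others
    _ = _ := by
      rw [Fin.prod_univ_succAbove _ j.castSucc,
        ← Finset.mul_prod_erase Finset.univ _ (Finset.mem_univ j), Fin.succAbove_castSucc_self,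
        Finset.prod_div_distrib]
      ring

end Field

theorem fiedler_spectrum_general {m : ℕ} {u : ℝ[X]} {lam : Fin (m + 1) → ℝ}
    (hu : u = nodal Finset.univ lam) {d : Fin m → ℝ} (hd : Function.Injective d)
    (hinter : ∀ j, d j ∈ Set.Icc (lam j.succ) (lam j.castSucc))
    {α : ℝ} (hα : α = -u.coeff m - ∑ j, d j) {ζ : Fin m → ℝ}
    (hζ : ∀ j, ζ j = √(-u.eval (d j) / ∏ i ∈ Finset.univ.erase j, (d j - d i))) :
    (arrowhead d ζ α).charpoly = u := by
  have hmonic : u.Monic := hu ▸ nodal_monic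
  have hdeg : u.natDegree = m + 1 := by rw [hu, natDegree_nodal, Finset.card_fin]
  have hnonneg : ∀ j, 0 ≤ -u.eval (d j) / ∏ i ∈ Finset.univ.erase j, (d j - d i) := by
    simpa only [hu, eval_nodal] using neg_prod_sub_div_prod_sub_nonneg_of_interlacing hinter
  rw [hα]
  exact charpoly_arrowhead_eq_of_sq_eq hmonic hdeg hd fun j => by
    rw [hζ, Real.sq_sqrt (hnonneg j)]

/-- Let `u` be a monic real polynomial of degree `n = m + 1` with `n` distinct real
roots `λ_1 > ⋯ > λ_n`, let `d_1 > ⋯ > d_{n-1}` satisfy `λ_{j+1} < d_j < λ_j`, let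
`α = -p - ∑_j d_j` where `p` is the coefficient of `x^{n-1}` in `u`, and let
`ζ_j = √(-u(d_j)/∏_{i ≠ j}(d_j - d_i))`.  Then the eigenvalues of the real symmetric
arrowhead matrix `A` with diagonal `d_1, …, d_{n-1}, α` and arrow entries
`ζ_1, …, ζ_{n-1}` are precisely the roots `λ_1, …, λ_n` of `u`. -/
theorem fiedler_spectrum (m : ℕ) (u : Polynomial ℝ) (hu : u.Monic)
    (hdeg : u.natDegree = m + 1) (lam : Fin (m + 1) → ℝ) (hlam : StrictAnti lam)
    (hroots : ∀ k, u.eval (lam k) = 0)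
    (d : Fin m → ℝ) (hd : StrictAnti d)
    (hinter : ∀ j : Fin m, lam j.succ < d j ∧ d j < lam j.castSucc)
    (α : ℝ) (hα : α = -u.coeff m - ∑ j, d j)
    (ζ : Fin m → ℝ)
    (hζ : ∀ j, ζ j =
      Real.sqrt (-u.eval (d j) / ∏ i ∈ Finset.univ.erase j, (d j - d i))) :
    ∀ μ : ℝ, Module.End.HasEigenvalue (Matrix.toLin' (arrowhead d ζ α)) μ ↔
      μ ∈ Set.range lam := by
  have hprod : u = nodal Finset.univ lam := eq_nodal_of_monic_of_eval_eq_zero hu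
    (by rw [hdeg, Finset.card_fin]) hlam.injective.injOn fun k _ => hroots k
  exact hasEigenvalue_toLin'_iff_mem_range_of_charpoly_eq_nodal <|
    (fiedler_spectrum_general hprod hd.injective
      (fun j => ⟨(hinter j).1.le, (hinter j).2.le⟩) hα hζ).trans hprod
end
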